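/- If additionally I and J are finite sets, every even separable state ω on A(I ∪ J) admits a separable decomposition into product states ω₁ᵢ ∘ ω₂ᵢ in which each ω₁ᵢ and each ω₂ᵢ is a pure even state. -/

import Mathlib

/-!
The local algebra `A(I)` of finitely many modes is a full matrix algebra with matrix units of
definite parity. These are produced by a *frame* `v s`: partial isometries in `A(I)` with a common
initial projection `p` and with `∑ v s * star (v s) = 1`. A frame is built one mode at a time
(`Frame.step`), multiplying by the vectors `b b*` and `b*` of the new mode `b`.

Given a separable decomposition `ω = ∑ lamᵢ φᵢ`, evenness of `ω` permits averaging each `φᵢ` over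
parity, and on `A(I) A(J)` the average is the product of the averaged marginals, since a product
state vanishes on a product of two odd elements (`average_mul`).

An even state of `A(I)` has a positive density matrix in the frame without entries between opposite
parities. Factoring it as `Mᴴ * M` and splitting each row of `M` by parity writes the state as a
convex combination of vector states of homogeneous vectors `ξ` (`Frame.decompose`). Vector states
are pure (`FrameVec.isPureStateOn`) and homogeneity of `ξ` makes them even.

The vector states of `ξ` in `A(I)` and `η` in `A(J)` have the product extension
`z ↦ ∑ ω (m* z m)`, summed over `m = ξ η (v s u t)*`, where `v` and `u` are the frames of `A(I)`
and `A(J)` (`exists_product_state`). This is a state on the whole algebra, and it serves at once as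
product state and as extension of both marginals. Multiplying out the two decompositions for each
`i` gives the result.
-/

open scoped ComplexOrder

/-- The canonical anticommutation relations for a family of annihilation operators. -/
def IsCAR {A : Type*} [Ring A] [StarRing A] {ι : Type*} [DecidableEq ι] (a : ι → A) : Prop :=
  (∀ i j, star (a i) * a j + a j * star (a i) = if i = j then (1 : A) else 0) ∧
  (∀ i j, star (a i) * star (a j) + star (a j) * star (a i) = 0) ∧
  (∀ i j, a i * a j + a j * a i = 0)

/-- A state: a normalized positive linear functional. -/
def IsState {A : Type*} [Ring A] [StarRing A] [Algebra ℂ A] (φ : A → ℂ) : Prop :=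
  (∀ x y, φ (x + y) = φ x + φ y) ∧ (∀ (c : ℂ) (x : A), φ (c • x) = c * φ x) ∧
  φ 1 = 1 ∧ ∀ x, 0 ≤ φ (star x * x)

/-- Separability of a state `ω` for a pair of subsets `S`, `T` of the algebra: `ω` agrees on
products with a convex combination of product states. -/
def IsSeparableState {A : Type*} [Ring A] [StarRing A] [Algebra ℂ A]
    (ω : A → ℂ) (S T : Set A) : Prop :=
  ∃ (n : ℕ) (lam : Fin n → ℝ) (φ : Fin n → (A → ℂ)),
    (∀ i, 0 < lam i) ∧ (∑ i, lam i = 1) ∧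
    (∀ i, IsState (φ i)) ∧
    (∀ i, ∀ x ∈ S, ∀ y ∈ T, φ i (x * y) = φ i x * φ i y) ∧
    (∀ x ∈ S, ∀ y ∈ T, ω (x * y) = ∑ i, (lam i : ℂ) * φ i (x * y))

/-- Purity of a state on the subalgebra `B`: it admits no nontrivial convex decomposition into
states on `B`. -/
def IsPureStateOn {A : Type*} [Ring A] [StarRing A] [Algebra ℂ A]
    (φ : A → ℂ) (B : Set A) : Prop :=
  ∀ ψ₁ ψ₂ : A → ℂ, IsState ψ₁ → IsState ψ₂ → ∀ t : ℝ, 0 < t → t < 1 →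
    (∀ x ∈ B, φ x = (t : ℂ) * ψ₁ x + (1 - (t : ℂ)) * ψ₂ x) →
    ∀ x ∈ B, ψ₁ x = φ x ∧ ψ₂ x = φ x

/-! ### States -/

section
variable {A : Type*} [Ring A] [StarRing A] [Algebra ℂ A]

theorem IsState.map_sum {φ : A → ℂ} (h : IsState φ)
    {κ : Type*} (s : Finset κ) (f : κ → A) : φ (∑ k ∈ s, f k) = ∑ k ∈ s, φ (f k) := by
  classical
  have h0 : φ 0 = 0 := by simpa using h.2.1 0 0
  induction s using Finset.induction_on with
  | empty => simpa using h0
  | insert k s hk ih => rw [Finset.sum_insert hk, Finset.sum_insert hk, h.1, ih]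

theorem IsState.map_neg {φ : A → ℂ} (h : IsState φ) (x : A) : φ (-x) = -φ x := by
  simpa using h.2.1 (-1) x

theorem IsState.map_sub {φ : A → ℂ} (h : IsState φ) (x y : A) : φ (x - y) = φ x - φ y := by
  rw [sub_eq_add_neg, h.1, h.map_neg, sub_eq_add_neg]

theorem IsState.map_star [StarModule ℂ A] {φ : A → ℂ} (h : IsState φ) (x : A) :
    φ (star x) = star (φ x) := by
  -- `φ ((1 + x)* (1 + x))` and `φ ((1 + i x)* (1 + i x))` are real.
  have key : ∀ y : A, (φ y + φ (star y)).im = 0 := by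
    intro y
    have h1 := (Complex.nonneg_iff.1 (h.2.2.2 (1 + y))).2
    have h2 := (Complex.nonneg_iff.1 (h.2.2.2 y)).2
    have e : star (1 + y) * (1 + y) = 1 + (y + star y) + star y * y := by
      rw [star_add, star_one]; noncomm_ring
    rw [e, h.1, h.1, h.1, h.2.2.1] at h1
    simp only [Complex.add_im, Complex.one_im] at h1 ⊢
    linarith
  have h1 := key x
  have h2 := key (Complex.I • x)
  rw [star_smul, h.2.1, h.2.1] at h2
  simp at h1 h2
  apply Complex.ext
  · simp; linarith
  · simp; linarith

/-- The degenerate case of the Cauchy–Schwarz inequality. -/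
theorem IsState.map_mul_eq_zero [StarModule ℂ A] {φ : A → ℂ} (h : IsState φ) {z : A}
    (hz : φ (star z * z) = 0) (y : A) : φ (y * z) = 0 := by
  set w := φ (y * z) with hw
  have hb : ∀ r : ℝ, 0 ≤ (φ (y * star y)).re - 2 * r * Complex.normSq w := by
    intro r
    set c : ℂ := -(r : ℂ) * star w with hc
    have h1 := (Complex.nonneg_iff.1 (h.2.2.2 (star y + c • z))).1
    have e : star (star y + c • z) * (star y + c • z) =
        y * star y + c • (y * z) + (star c) • star (y * z) + (c * star c) • (star z * z) := by
      simp only [star_add, star_smul, star_star, star_mul, mul_add, add_mul, smul_mul_assoc,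
        mul_smul_comm, smul_add, smul_smul]
      abel
    rw [e, h.1, h.1, h.1, h.2.1, h.2.1, h.2.1, hz, h.map_star, ← hw] at h1
    rw [Complex.normSq_apply]
    simp [hc] at h1
    linarith
  by_contra hne
  have hpos := Complex.normSq_pos.2 hne
  have := hb (((φ (y * star y)).re + 1) / (2 * Complex.normSq w))
  have e2 : 2 * (((φ (y * star y)).re + 1) / (2 * Complex.normSq w)) * Complex.normSq w
    = (φ (y * star y)).re + 1 := by field_simp
  linarith

theorem IsState.map_mul_eq_zero' [StarModule ℂ A] {φ : A → ℂ} (h : IsState φ) {z : A}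
    (hz : φ (star z * z) = 0) (y : A) : φ (star z * y) = 0 := by
  have := h.map_mul_eq_zero hz (star y)
  have e : star z * y = star (star y * z) := by simp
  rw [e, h.map_star, this, star_zero]

/-- Induction on a `*`-subalgebra generated by a family, treating each generator and its adjoint
separately, so that the adjoint need not preserve the motive. -/
theorem StarAlgebra.adjoin_image_induction [StarModule ℂ A] {ι : Type*} {a : ι → A} {S : Set ι}
    {P : (x : A) → x ∈ StarAlgebra.adjoin ℂ (a '' S) → Prop}
    (gen : ∀ i (hi : i ∈ S), P (a i) (StarAlgebra.subset_adjoin ℂ _ ⟨i, hi, rfl⟩))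
    (gen_star : ∀ i (hi : i ∈ S),
      P (star (a i)) (star_mem (StarAlgebra.subset_adjoin ℂ _ ⟨i, hi, rfl⟩)))
    (one : P 1 (one_mem _))
    (smul : ∀ (c : ℂ) x hx, P x hx → P (c • x) ((StarAlgebra.adjoin ℂ (a '' S)).smul_mem hx c))
    (add : ∀ x y hx hy, P x hx → P y hy → P (x + y) (add_mem hx hy))
    (mul : ∀ x y hx hy, P x hx → P y hy → P (x * y) (mul_mem hx hy))
    {x : A} (hx : x ∈ StarAlgebra.adjoin ℂ (a '' S)) : P x hx := by
  have key : ∀ x ∈ Algebra.adjoin ℂ (a '' S ∪ star (a '' S)), ∃ h, P x h := by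
    intro x hx
    induction hx using Algebra.adjoin_induction with
    | mem x hx =>
      rcases hx with ⟨i, hi, rfl⟩ | ⟨i, hi, h⟩
      · exact ⟨_, gen i hi⟩
      · obtain rfl : x = star (a i) := by rw [← star_star x, ← h]
        exact ⟨_, gen_star i hi⟩
    | algebraMap r => rw [Algebra.algebraMap_eq_smul_one]; exact ⟨_, smul r 1 _ one⟩
    | add x y _ _ h1 h2 => exact ⟨_, add x y _ _ h1.2 h2.2⟩
    | mul x y _ _ h1 h2 => exact ⟨_, mul x y _ _ h1.2 h2.2⟩
  exact (key x (by rwa [← StarAlgebra.adjoin_toSubalgebra, StarSubalgebra.mem_toSubalgebra])).2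

/-- A functional `z ↦ ∑ φ (mₖ* z mₖ)`, suitably normalised, is a state. -/
theorem IsState.sum_conj {φ : A → ℂ} (h : IsState φ) {κ : Type*} [Fintype κ] (m : κ → A)
    (h1 : ∑ k, φ (star (m k) * m k) = 1) :
    IsState (fun z => ∑ k, φ (star (m k) * z * m k)) := by
  refine ⟨fun x y => ?_, fun c x => ?_, by simpa using h1, fun x => ?_⟩
  · rw [← Finset.sum_add_distrib]
    exact Finset.sum_congr rfl fun k _ => by rw [mul_add, add_mul, h.1]
  · rw [Finset.mul_sum]
    exact Finset.sum_congr rfl fun k _ => by rw [mul_smul_comm, smul_mul_assoc, h.2.1]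
  · refine Finset.sum_nonneg fun k _ => ?_
    have := h.2.2.2 (x * m k)
    rwa [star_mul, mul_assoc, ← mul_assoc (star x), ← mul_assoc] at this

theorem IsState.average {φ : A → ℂ} (h : IsState φ) (Θ : A ≃⋆ₐ[ℂ] A) :
    IsState (fun x => (φ x + φ (Θ x)) / 2) := by
  refine ⟨fun x y => ?_, fun c x => ?_, ?_, fun x => ?_⟩
  · simp only [_root_.map_add, h.1]; ring
  · simp only [_root_.map_smul, h.2.1]; ring
  · simp only [map_one, h.2.2.1]; norm_num
  · have h1 := h.2.2.2 x
    have h2 := h.2.2.2 (Θ x)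
    rw [← StarHomClass.map_star Θ, ← map_mul] at h2
    have : (0 : ℂ) ≤ 2⁻¹ := by norm_num [Complex.nonneg_iff]
    simp only [div_eq_mul_inv]
    exact mul_nonneg (add_nonneg h1 h2) this
end

/-! ### Graded commutation relations -/

section CAR
variable {A : Type*} [Ring A] [StarRing A] [Algebra ℂ A] [StarModule ℂ A]
  {ι : Type*} {a : ι → A} {Θ : A ≃⋆ₐ[ℂ] A}

/-- The parity automorphism preserves each `A(S)`. -/
theorem parity_mem (hΘ : ∀ i, Θ (a i) = - a i) {S : Set ι} {x : A}
    (hx : x ∈ StarAlgebra.adjoin ℂ (a '' S)) : Θ x ∈ StarAlgebra.adjoin ℂ (a '' S) := by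
  have hg : ∀ i ∈ S, a i ∈ StarAlgebra.adjoin ℂ (a '' S) := fun i hi =>
    StarAlgebra.subset_adjoin ℂ _ ⟨i, hi, rfl⟩
  induction hx using StarAlgebra.adjoin_image_induction with
  | gen i hi => rw [hΘ]; exact neg_mem (hg i hi)
  | gen_star i hi => rw [map_star, hΘ]; exact star_mem (neg_mem (hg i hi))
  | one => rw [map_one]; exact one_mem _
  | smul c x _ h => rw [map_smul]; exact (StarAlgebra.adjoin ℂ (a '' S)).smul_mem h c
  | add x y _ _ h1 h2 => rw [map_add]; exact add_mem h1 h2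
  | mul x y _ _ h1 h2 => rw [map_mul]; exact mul_mem h1 h2

/-- `Θ` is arbitrary outside the CAR algebra, but it is an involution on each `A(S)`. -/
theorem parity_parity (hΘ : ∀ i, Θ (a i) = - a i) {S : Set ι} {x : A}
    (hx : x ∈ StarAlgebra.adjoin ℂ (a '' S)) : Θ (Θ x) = x := by
  induction hx using StarAlgebra.adjoin_image_induction with
  | gen i hi => simp [hΘ]
  | gen_star i hi => simp [hΘ, map_star]
  | one => simp
  | smul c x _ h => simp [h]
  | add x y _ _ h1 h2 => simp [h1, h2]
  | mul x y _ _ h1 h2 => simp [h1, h2]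

variable [DecidableEq ι]

omit [Algebra ℂ A] [StarModule ℂ A] in
theorem IsCAR.star_mul_of_ne (h : IsCAR a) {i j : ι} (hij : i ≠ j) :
    star (a i) * a j = - (a j * star (a i)) :=
  eq_neg_of_add_eq_zero_left (by simpa [hij] using h.1 i j)

theorem IsCAR.mul_eq_parity_mul (h : IsCAR a) (hΘ : ∀ i, Θ (a i) = - a i) {S : Set ι} {i : ι}
    (hi : i ∉ S) {x : A} (hx : x ∈ StarAlgebra.adjoin ℂ (a '' S)) : a i * x = Θ x * a i := by
  induction hx using StarAlgebra.adjoin_image_induction with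
  | gen j hj => rw [hΘ, neg_mul]; exact eq_neg_of_add_eq_zero_left (h.2.2 i j)
  | gen_star j hj =>
    rw [map_star, hΘ, star_neg, neg_mul, h.star_mul_of_ne (by rintro rfl; exact hi hj), neg_neg]
  | one => simp
  | smul c x _ h => simp [h]
  | add x y _ _ h1 h2 => simp [h1, h2, mul_add, add_mul]
  | mul x y _ _ h1 h2 => rw [map_mul, ← mul_assoc, h1, mul_assoc, h2, mul_assoc]

theorem IsCAR.star_mul_eq_parity_mul (h : IsCAR a) (hΘ : ∀ i, Θ (a i) = - a i) {S : Set ι} {i : ι}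
    (hi : i ∉ S) {x : A} (hx : x ∈ StarAlgebra.adjoin ℂ (a '' S)) :
    star (a i) * x = Θ x * star (a i) := by
  induction hx using StarAlgebra.adjoin_image_induction with
  | gen j hj => rw [hΘ, neg_mul]; exact h.star_mul_of_ne (by rintro rfl; exact hi hj)
  | gen_star j hj =>
    rw [map_star, hΘ, star_neg, neg_mul]; exact eq_neg_of_add_eq_zero_left (h.2.1 i j)
  | one => simp
  | smul c x _ h => simp [h]
  | add x y _ _ h1 h2 => simp [h1, h2, mul_add, add_mul]
  | mul x y _ _ h1 h2 => rw [map_mul, ← mul_assoc, h1, mul_assoc, h2, mul_assoc]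

theorem IsCAR.mul_comm_of_even (h : IsCAR a) (hΘ : ∀ i, Θ (a i) = - a i) {S T : Set ι}
    (hST : Disjoint S T) {x y : A} (hx : x ∈ StarAlgebra.adjoin ℂ (a '' S)) (hev : Θ x = x)
    (hy : y ∈ StarAlgebra.adjoin ℂ (a '' T)) : y * x = x * y := by
  induction hy using StarAlgebra.adjoin_image_induction with
  | gen j hj => rw [h.mul_eq_parity_mul hΘ (hST.notMem_of_mem_right hj) hx, hev]
  | gen_star j hj => rw [h.star_mul_eq_parity_mul hΘ (hST.notMem_of_mem_right hj) hx, hev]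
  | one => simp
  | smul c x _ h => simp [h]
  | add x y _ _ h1 h2 => simp [h1, h2, mul_add, add_mul]
  | mul y z _ _ h1 h2 => rw [mul_assoc, h2, ← mul_assoc, h1, mul_assoc]

theorem IsCAR.mul_comm_of_odd (h : IsCAR a) (hΘ : ∀ i, Θ (a i) = - a i) {S T : Set ι}
    (hST : Disjoint S T) {x y : A} (hx : x ∈ StarAlgebra.adjoin ℂ (a '' S)) (hodd : Θ x = -x)
    (hy : y ∈ StarAlgebra.adjoin ℂ (a '' T)) : y * x = x * Θ y := by
  induction hy using StarAlgebra.adjoin_image_induction with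
  | gen j hj => simp [h.mul_eq_parity_mul hΘ (hST.notMem_of_mem_right hj) hx, hodd, hΘ]
  | gen_star j hj =>
    simp [h.star_mul_eq_parity_mul hΘ (hST.notMem_of_mem_right hj) hx, hodd, hΘ, map_star]
  | one => simp
  | smul c x _ h => simp [h]
  | add x y _ _ h1 h2 => simp [h1, h2, mul_add, add_mul]
  | mul y z _ _ h1 h2 => rw [mul_assoc, h2, ← mul_assoc, h1, map_mul, mul_assoc]


/-! ### Homogeneous frames -/

/-- The sign `±1` attached to a parity; `true` stands for even. -/
def paritySign (b : Bool) : ℂ := if b then 1 else -1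

/-- A homogeneous frame for a `*`-subalgebra `B`: partial isometries `v s` in `B` with common
initial projection `p`, with final projections summing to `1`, each of definite parity `ε s`
under `Θ`, and such that `v s * star (v t)` are matrix units for `B` (expressed by `scalar`:
the compression of an element of `B` by the frame is a matrix of scalars). -/
structure Frame (Θ : A ≃⋆ₐ[ℂ] A) (B : StarSubalgebra ℂ A) (K : Type) [Fintype K]
    [DecidableEq K] (v : K → A) (p : A) (ε : K → Bool) : Prop where
  mem : ∀ s, v s ∈ B
  p_mem : p ∈ B
  p_even : Θ p = p
  p_star : star p = p
  p_mul : p * p = p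
  homog : ∀ s, Θ (v s) = paritySign (ε s) • v s
  orth : ∀ s t, star (v s) * v t = if s = t then p else 0
  mul_p : ∀ s, v s * p = v s
  total : ∑ s, v s * star (v s) = 1
  scalar : ∀ x ∈ B, ∀ s t, ∃ c : ℂ, star (v s) * x * v t = c • p

omit [DecidableEq ι] in
theorem Frame.base (Θ : A ≃⋆ₐ[ℂ] A) :
    Frame Θ (StarAlgebra.adjoin ℂ (a '' ((∅ : Finset ι) : Set ι))) Unit (fun _ => 1) 1
      (fun _ => true) where
  mem _ := one_mem _
  p_mem := one_mem _
  p_even := map_one _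
  p_star := star_one _
  p_mul := one_mul _
  homog _ := by simp [paritySign]
  orth _ _ := by simp
  mul_p _ := one_mul _
  total := by simp
  scalar x hx _ _ := by
    induction hx using StarAlgebra.adjoin_image_induction with
    | gen i hi => simp at hi
    | gen_star i hi => simp at hi
    | one => exact ⟨1, by simp⟩
    | smul c x _ h => obtain ⟨d, h⟩ := h; exact ⟨c * d, by simp_all [mul_smul]⟩
    | add x y _ _ h1 h2 =>
      obtain ⟨c, h1⟩ := h1; obtain ⟨d, h2⟩ := h2; exact ⟨c + d, by simp_all [add_smul]⟩
    | mul x y _ _ h1 h2 =>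
      obtain ⟨c, h1⟩ := h1; obtain ⟨d, h2⟩ := h2; exact ⟨d * c, by simp_all [mul_smul]⟩

section Step
variable {I : Set ι} {K : Type} [Fintype K] [DecidableEq K] {v : K → A} {p : A} {ε : K → Bool}

/-- The frame vectors of a single mode with annihilator `b`: the empty and the occupied one. -/
def modeVec (b : A) (α : Bool) : A := if α then b * star b else star b

omit [StarModule ℂ A] in
theorem modeVec_relations {b : A} (h1 : star b * b + b * star b = 1) (h2 : b * b = 0) :
    (∀ α β, star (modeVec b α) * modeVec b β = if α = β then b * star b else 0) ∧
    (∀ α, modeVec b α * (b * star b) = modeVec b α) ∧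
    (∑ α, modeVec b α * star (modeVec b α) = 1) ∧
    (∀ α β, ∃ c : ℂ, star (modeVec b α) * b * modeVec b β = c • (b * star b)) ∧
    (∀ α β, ∃ c : ℂ, star (modeVec b α) * star b * modeVec b β = c • (b * star b)) := by
  have h3 : star b * star b = 0 := by rw [← star_mul, h2, star_zero]
  have h4 : b * star b * b = b := by
    have := congrArg (b * ·) h1
    simpa [mul_add, ← mul_assoc, h2] using this
  have h5 : star b * (b * star b) = star b := by
    have := congrArg star h4
    simpa [mul_assoc] using this
  have h6 : b * (star b * b) = b := by rw [← mul_assoc, h4]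
  have h7 : ∀ z, b * (b * z) = 0 := fun z => by rw [← mul_assoc, h2, zero_mul]
  have h8 : ∀ z, star b * (star b * z) = 0 := fun z => by rw [← mul_assoc, h3, zero_mul]
  refine ⟨?_, ?_, ?_, ?_, ?_⟩
  · rintro (_ | _) (_ | _) <;> simp [modeVec, mul_assoc, h3, h5, h7]
  · rintro (_ | _) <;> simp [modeVec, mul_assoc, h5]
  · simpa [modeVec, mul_assoc, h5, add_comm] using h1
  · rintro (_ | _) (_ | _)
    · exact ⟨0, by simp [modeVec, h2]⟩
    · exact ⟨0, by simp [modeVec, mul_assoc, h7]⟩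
    · exact ⟨1, by simp [modeVec, mul_assoc, h5]⟩
    · exact ⟨0, by simp [modeVec, mul_assoc, h7]⟩
  · rintro (_ | _) (_ | _)
    · exact ⟨0, by simp [modeVec, mul_assoc, h3]⟩
    · exact ⟨1, by simp [modeVec, mul_assoc, h5]⟩
    · exact ⟨0, by simp [modeVec, mul_assoc, h3]⟩
    · exact ⟨0, by simp [modeVec, mul_assoc, h8]⟩

omit [StarModule ℂ A] in
theorem modeVec_parity {b : A} (hb : Θ b = -b) (α : Bool) :
    Θ (modeVec b α) = paritySign α • modeVec b α := by
  cases α <;> simp [modeVec, paritySign, map_star, hb]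

/-- Adjoining one more mode `i` to a frame: each frame vector is multiplied by the two vectors of
the new mode. -/
theorem Frame.step (h : IsCAR a) (hΘ : ∀ i, Θ (a i) = - a i) {i : ι} (hi : i ∉ I)
    (F : Frame Θ (StarAlgebra.adjoin ℂ (a '' I)) K v p ε) :
    Frame Θ (StarAlgebra.adjoin ℂ (a '' (insert i I))) (K × Bool)
      (fun k => v k.1 * modeVec (a i) k.2) (p * (a i * star (a i)))
      (fun k => ε k.1 == k.2) := by
  obtain ⟨hy, hyP, hysum, hyb, hybs⟩ := modeVec_relations (b := a i)
    (by simpa using h.1 i i)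
    (by
      have h0 : (2 : ℂ) • (a i * a i) = 0 := by rw [two_smul]; exact h.2.2 i i
      exact (smul_eq_zero_iff_right (two_ne_zero)).1 h0)
  set y := modeVec (a i) with hydef
  set P := a i * star (a i) with hP
  have hb : ∀ x ∈ StarAlgebra.adjoin ℂ (a '' I), a i * x = Θ x * a i := fun x hx =>
    h.mul_eq_parity_mul hΘ hi hx
  have hbs : ∀ x ∈ StarAlgebra.adjoin ℂ (a '' I), star (a i) * x = Θ x * star (a i) :=
    fun x hx => h.star_mul_eq_parity_mul hΘ hi hx
  have hpb : a i * p = p * a i := by rw [hb p F.p_mem, F.p_even]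
  have hpbs : star (a i) * p = p * star (a i) := by rw [hbs p F.p_mem, F.p_even]
  have hpP : P * p = p * P := by rw [hP, mul_assoc, hpbs, ← mul_assoc, hpb, mul_assoc]
  have hpy : ∀ α, y α * p = p * y α := by
    rintro (_ | _)
    · simpa [hydef, modeVec] using hpbs
    · simpa [hydef, modeVec] using hpP
  have hpys : ∀ α, star (y α) * p = p * star (y α) := fun α => by
    have := congrArg star (hpy α)
    simpa [F.p_star] using this.symm
  have hPP : P * P = P := by
    have h1 := hyP true
    simpa [hydef, modeVec, hP] using h1
  have hPs : star P = P := by simp [hP]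
  have hPe : Θ P = P := by simp [hP, map_star, hΘ]
  have hsub : StarAlgebra.adjoin ℂ (a '' I) ≤ StarAlgebra.adjoin ℂ (a '' (insert i I)) :=
    StarAlgebra.adjoin_mono (Set.image_mono (Set.subset_insert i I))
  have hbmem : a i ∈ StarAlgebra.adjoin ℂ (a '' (insert i I)) :=
    StarAlgebra.subset_adjoin ℂ _ ⟨i, Set.mem_insert i I, rfl⟩
  have hPmem : P ∈ StarAlgebra.adjoin ℂ (a '' (insert i I)) := mul_mem hbmem (star_mem hbmem)
  have hymem : ∀ α, y α ∈ StarAlgebra.adjoin ℂ (a '' (insert i I)) := by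
    rintro (_ | _)
    · simpa [hydef, modeVec] using star_mem hbmem
    · simpa [hydef, modeVec] using hPmem
  have horth : ∀ k l : K × Bool, star (v k.1 * y k.2) * (v l.1 * y l.2) =
      if k = l then p * P else 0 := by
    rintro ⟨s, α⟩ ⟨t, β⟩
    have e : star (v s * y α) * (v t * y β) = star (y α) * (star (v s) * v t) * y β := by
      simp only [star_mul, mul_assoc]
    rw [e, F.orth]
    by_cases hst : s = t
    · subst hst
      rw [if_pos rfl, hpys, mul_assoc, hy]
      by_cases hαβ : α = β <;> simp [hαβ]
    · simp [hst]
  have htotal : ∑ k : K × Bool, (v k.1 * y k.2) * star (v k.1 * y k.2) = 1 := by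
    rw [Fintype.sum_prod_type]
    calc ∑ s, ∑ α, (v s * y α) * star (v s * y α)
        = ∑ s, v s * (∑ α, y α * star (y α)) * star (v s) := by
          refine Finset.sum_congr rfl fun s _ => ?_
          rw [Finset.mul_sum, Finset.sum_mul]
          exact Finset.sum_congr rfl fun α _ => by simp only [star_mul, mul_assoc]
      _ = 1 := by simp only [hysum, mul_one, F.total]
  refine ⟨fun k => mul_mem (hsub (F.mem _)) (hymem _), mul_mem (hsub F.p_mem) hPmem, ?_, ?_, ?_,
    ?_, horth, ?_, htotal, ?_⟩
  · rw [map_mul, F.p_even, hPe]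
  · rw [star_mul, F.p_star, hPs, hpP]
  · rw [mul_assoc, ← mul_assoc P, hpP, mul_assoc p P P, hPP, ← mul_assoc, F.p_mul]
  · rintro ⟨s, α⟩
    rw [map_mul, F.homog, modeVec_parity (hΘ i), smul_mul_smul_comm]
    congr 1
    cases ε s <;> cases α <;> simp [paritySign]
  · rintro ⟨s, α⟩
    show v s * y α * (p * P) = v s * y α
    rw [mul_assoc, ← mul_assoc (y α), hpy, mul_assoc p, hyP, ← mul_assoc, F.mul_p]
  · intro x hx
    -- moving the new generator through the old frame only produces signs
    have hmid : ∀ z, (∀ α β, ∃ c : ℂ, star (y α) * z * y β = c • P) →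
        (∀ x ∈ StarAlgebra.adjoin ℂ (a '' I), z * x = Θ x * z) → ∀ k l : K × Bool,
        ∃ c : ℂ, star (v k.1 * y k.2) * z * (v l.1 * y l.2) = c • (p * P) := by
      rintro z hz hzc ⟨s, α⟩ ⟨t, β⟩
      obtain ⟨c, hc⟩ := hz α β
      have e : star (v s * y α) * z * (v t * y β) =
          paritySign (ε t) • (star (y α) * (star (v s) * v t) * (z * y β)) := by
        calc star (v s * y α) * z * (v t * y β)
            = star (y α) * star (v s) * (z * v t) * y β := by simp only [star_mul, mul_assoc]
          _ = _ := by
            rw [hzc _ (F.mem t), F.homog]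
            simp only [smul_mul_assoc, mul_smul_comm, mul_assoc]
      rw [e, F.orth]
      by_cases hst : s = t
      · refine ⟨paritySign (ε t) * c, ?_⟩
        rw [if_pos hst, hpys, mul_assoc, ← mul_assoc (star (y α)), hc, mul_smul_comm, smul_smul]
      · exact ⟨0, by simp [hst]⟩
    have hold : ∀ z ∈ StarAlgebra.adjoin ℂ (a '' I), ∀ k l : K × Bool,
        ∃ c : ℂ, star (v k.1 * y k.2) * z * (v l.1 * y l.2) = c • (p * P) := by
      rintro z hz ⟨s, α⟩ ⟨t, β⟩
      obtain ⟨c, hc⟩ := F.scalar z hz s t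
      have e : star (v s * y α) * z * (v t * y β) = star (y α) * (star (v s) * z * v t) * y β := by
        simp only [star_mul, mul_assoc]
      refine ⟨if α = β then c else 0, ?_⟩
      dsimp only
      rw [e, hc, mul_smul_comm, smul_mul_assoc, hpys, mul_assoc, hy]
      by_cases hαβ : α = β <;> simp [hαβ]
    induction hx using StarAlgebra.adjoin_image_induction with
    | gen j hj =>
      rcases hj with rfl | hj
      · exact hmid _ hyb hb
      · exact hold _ (StarAlgebra.subset_adjoin ℂ _ ⟨j, hj, rfl⟩)
    | gen_star j hj =>
      rcases hj with rfl | hj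
      · exact hmid _ hybs hbs
      · exact hold _ (star_mem (StarAlgebra.subset_adjoin ℂ _ ⟨j, hj, rfl⟩))
    | one => exact hold 1 (one_mem _)
    | smul c x _ hx =>
      intro k l
      obtain ⟨d, hd⟩ := hx k l
      exact ⟨c * d, by rw [mul_smul_comm, smul_mul_assoc, hd, smul_smul]⟩
    | add x z _ _ h1 h2 =>
      intro k l
      obtain ⟨c, hc⟩ := h1 k l
      obtain ⟨d, hd⟩ := h2 k l
      exact ⟨c + d, by rw [mul_add, add_mul, hc, hd, add_smul]⟩
    | mul x z _ _ h1 h2 =>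
      intro k l
      choose c hc using h1 k
      choose d hd using fun m => h2 m l
      refine ⟨∑ m, c m * d m, ?_⟩
      have hpPi : (p * P) * (p * P) = p * P := by
        rw [mul_assoc, ← mul_assoc P, hpP, mul_assoc p P P, hPP, ← mul_assoc, F.p_mul]
      -- insert the resolution of the identity between the two factors
      calc star (v k.1 * y k.2) * (x * z) * (v l.1 * y l.2)
          = star (v k.1 * y k.2) * x * 1 * (z * (v l.1 * y l.2)) := by
            simp only [mul_assoc, one_mul]
        _ = ∑ m : K × Bool, (star (v k.1 * y k.2) * x * (v m.1 * y m.2)) *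
              (star (v m.1 * y m.2) * z * (v l.1 * y l.2)) := by
            rw [← htotal, Finset.mul_sum, Finset.sum_mul]
            exact Finset.sum_congr rfl fun m _ => by simp only [mul_assoc]
        _ = _ := by
            rw [Finset.sum_smul]
            exact Finset.sum_congr rfl fun m _ => by
              rw [hc, hd, smul_mul_smul_comm, hpPi]
end Step

/-- Every finite set of modes has a homogeneous frame. -/
theorem exists_frame (h : IsCAR a) (hΘ : ∀ i, Θ (a i) = - a i) (I : Finset ι) :
    ∃ (K : Type) (_ : Fintype K) (_ : DecidableEq K) (v : K → A) (p : A) (ε : K → Bool),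
      Frame Θ (StarAlgebra.adjoin ℂ (a '' (I : Set ι))) K v p ε := by
  induction I using Finset.induction_on with
  | empty => exact ⟨_, _, _, _, _, _, Frame.base Θ⟩
  | insert i I hi ih =>
    obtain ⟨K, _, _, v, p, ε, F⟩ := ih
    rw [Finset.coe_insert]
    exact ⟨_, _, _, _, _, _, F.step h hΘ (by simpa using hi)⟩

/-! ### Even vector states -/

/-- A normalised homogeneous vector for the frame: `x ↦ star ξ * x * ξ ∈ ℂ p` is then an even
vector state of `B`. -/
structure FrameVec (Θ : A ≃⋆ₐ[ℂ] A) (B : StarSubalgebra ℂ A) (p ξ : A) : Prop where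
  mem : ξ ∈ B
  norm : star ξ * ξ = p
  mul_p : ξ * p = ξ
  homog : ∃ δ, Θ ξ = paritySign δ • ξ
  scalar : ∀ x ∈ B, ∃ c : ℂ, star ξ * x * ξ = c • p

section Decompose
variable {B : StarSubalgebra ℂ A} {K : Type} [Fintype K] [DecidableEq K] {v : K → A} {p : A}
  {ε : K → Bool}

theorem paritySign_mul_self (δ : Bool) : paritySign δ * paritySign δ = 1 := by
  cases δ <;> simp [paritySign]

theorem star_paritySign (δ : Bool) : star (paritySign δ) = paritySign δ := by
  cases δ <;> simp [paritySign]

omit [DecidableEq K] in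
/-- The density matrix of a state with respect to a family of vectors is positive semidefinite. -/
theorem IsState.posSemidef_frame {φ : A → ℂ} (h : IsState φ) (v : K → A) :
    (Matrix.of fun s t => φ (v s * star (v t))).PosSemidef := by
  refine Matrix.PosSemidef.of_dotProduct_mulVec_nonneg ?_ fun z => ?_
  · ext s t
    simp [Matrix.conjTranspose_apply, ← starRingEnd_apply]
    have := h.map_star (v t * star (v s))
    simpa using this.symm
  · have := h.2.2.2 (∑ t, z t • star (v t))
    convert this using 1
    simp only [star_sum, star_smul, star_star, Finset.sum_mul, Finset.mul_sum, smul_mul_smul_comm,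
      h.map_sum, h.2.1, Matrix.mulVec, dotProduct, Matrix.of_apply, Pi.star_apply]
    refine Finset.sum_comm.trans ?_
    exact Finset.sum_congr rfl fun s _ => Finset.sum_congr rfl fun t _ => by ring

/-- The density matrix of an even state has no entries between basis vectors of opposite parity. -/
theorem Frame.density_eq_zero (F : Frame Θ B K v p ε) {φ : A → ℂ} (h : IsState φ)
    (hev : ∀ x ∈ B, φ (Θ x) = φ x) {s t : K} (hst : ε s ≠ ε t) : φ (v s * star (v t)) = 0 := by
  have h1 := hev _ (mul_mem (F.mem s) (star_mem (F.mem t)))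
  rw [map_mul, StarHomClass.map_star Θ, F.homog, F.homog, star_smul, smul_mul_smul_comm, h.2.1,
    star_paritySign] at h1
  have h2 : paritySign (ε s) * paritySign (ε t) = -1 := by
    revert hst
    cases ε s <;> cases ε t <;> simp [paritySign]
  rw [h2] at h1
  linear_combination (-1 / 2 : ℂ) * h1

/-- The products `v s * star (v t)` span `B`, with the compressions as coefficients. -/
theorem Frame.expand (F : Frame Θ B K v p ε) {x : A} {c : K → K → ℂ}
    (hc : ∀ s t, star (v s) * x * v t = c s t • p) :
    x = ∑ s, ∑ t, c s t • (v s * star (v t)) := by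
  calc x = 1 * x * 1 := by simp
    _ = ∑ s, ∑ t, v s * (star (v s) * x * v t) * star (v t) := by
      rw [← F.total, Finset.sum_mul, Finset.sum_mul]
      refine Finset.sum_congr rfl fun s _ => ?_
      rw [Finset.mul_sum]
      exact Finset.sum_congr rfl fun t _ => by simp only [mul_assoc]
    _ = _ := by
      refine Finset.sum_congr rfl fun s _ => Finset.sum_congr rfl fun t _ => ?_
      rw [hc, mul_smul_comm, smul_mul_assoc, F.mul_p]

omit [DecidableEq K] in
/-- Compressing by a combination of frame vectors evaluates a sesquilinear form. -/
theorem Frame.compress (w : K → ℂ) {x : A} {c : K → K → ℂ}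
    (hc : ∀ s t, star (v s) * x * v t = c s t • p) :
    star (∑ t, w t • v t) * x * (∑ t, w t • v t) =
      (∑ s, ∑ t, star (w s) * w t * c s t) • p := by
  simp only [star_sum, star_smul, Finset.sum_mul, Finset.mul_sum, Finset.sum_smul]
  refine (Finset.sum_comm).trans ?_
  refine Finset.sum_congr rfl fun s _ => Finset.sum_congr rfl fun t _ => ?_
  rw [smul_mul_assoc, smul_mul_smul_comm, hc, smul_smul]

/-- An even state on `B` is a finite convex combination of even vector states: factor the density
matrix as `Mᴴ * M` and split every row of `M` into its even and odd part. Rows that vanish are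
discarded, the others normalised. -/
theorem Frame.decompose (F : Frame Θ B K v p ε) {φ : A → ℂ} (h : IsState φ)
    (hev : ∀ x ∈ B, φ (Θ x) = φ x) :
    ∃ (κ : Type) (_ : Fintype κ) (N : κ → ℝ) (ξ : κ → A), (∀ k, 0 < N k) ∧
      (∀ k, FrameVec Θ B p (ξ k)) ∧
      ∀ x ∈ B, ∃ c : κ → ℂ, (∀ k, star (ξ k) * x * ξ k = c k • p) ∧
        φ x = ∑ k, (N k : ℂ) * c k := by
  classical
  obtain ⟨M, hM⟩ : ∃ M : Matrix K K ℂ,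
      (Matrix.of fun s t => φ (v s * star (v t))) = M.conjTranspose * M := by
    open scoped MatrixOrder Matrix.Norms.L2Operator in
    obtain ⟨M, hM⟩ := CStarAlgebra.nonneg_iff_eq_star_mul_self.mp (h.posSemidef_frame v).nonneg
    exact ⟨M, hM⟩
  have hM' : ∀ s t, φ (v s * star (v t)) = ∑ k, star (M k s) * M k t := fun s t => by
    have := congrFun (congrFun hM s) t
    simpa [Matrix.mul_apply] using this
  -- `w (k, b)` is the part of parity `b` of the `k`-th row of `M`
  let w : K × Bool → K → ℂ := fun k t => if ε t = k.2 then M k.1 t else 0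
  have hw : ∀ s t, ∑ k, star (w k s) * w k t = φ (v s * star (v t)) := by
    intro s t
    rw [Fintype.sum_prod_type]
    by_cases hst : ε s = ε t
    · rw [hM']
      refine Finset.sum_congr rfl fun k _ => ?_
      rw [Finset.sum_eq_single (ε t)]
      · simp [w, hst]
      · intro b _ hb; simp [w, hb.symm]
      · simp
    · rw [F.density_eq_zero h hev hst]
      refine Finset.sum_eq_zero fun k _ => Finset.sum_eq_zero fun b _ => ?_
      by_cases hb : ε s = b
      · have : ε t ≠ b := fun h => hst (hb.trans h.symm)
        simp [w, this]
      · simp [w, hb]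
  let ζ : K × Bool → A := fun k => ∑ t, w k t • v t
  let n : K × Bool → ℝ := fun k => ∑ t, Complex.normSq (w k t)
  have hn0 : ∀ k, 0 ≤ n k := fun k => Finset.sum_nonneg fun t _ => Complex.normSq_nonneg _
  have hw0 : ∀ k, n k = 0 → ∀ t, w k t = 0 := fun k hk t => by
    have := (Finset.sum_eq_zero_iff_of_nonneg fun t _ => Complex.normSq_nonneg (w k t)).1 hk t
      (Finset.mem_univ t)
    exact Complex.normSq_eq_zero.1 this
  have hζn : ∀ k, star (ζ k) * ζ k = (n k : ℂ) • p := by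
    intro k
    have h1 := Frame.compress (p := p) (v := v) (x := 1) (c := fun s t => if s = t then 1 else 0)
      (w k) (fun s t => by rw [mul_one, F.orth]; split_ifs <;> simp)
    rw [mul_one] at h1
    rw [h1]
    congr 1
    simp only [mul_ite, mul_one, mul_zero, Finset.sum_ite_eq, Finset.mem_univ, if_true, n,
      Complex.ofReal_sum]
    exact Finset.sum_congr rfl fun t _ => Complex.normSq_eq_conj_mul_self.symm
  have hζmem : ∀ k, ζ k ∈ B := fun k => sum_mem fun t _ => B.smul_mem (F.mem t) _
  have hζp : ∀ k, ζ k * p = ζ k := fun k => by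
    simp only [ζ, Finset.sum_mul, smul_mul_assoc, F.mul_p]
  have hζh : ∀ k, Θ (ζ k) = paritySign k.2 • ζ k := fun k => by
    simp only [ζ, map_sum, map_smul, F.homog, Finset.smul_sum]
    refine Finset.sum_congr rfl fun t _ => ?_
    by_cases ht : ε t = k.2
    · rw [ht, smul_comm]
    · simp [w, ht]
  let κ := {k : K × Bool // n k ≠ 0}
  have hκ : ∀ k : κ, 0 < n k.1 := fun k => lt_of_le_of_ne (hn0 _) k.2.symm
  let r : κ → ℂ := fun k => ((Real.sqrt (n k.1))⁻¹ : ℝ)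
  have hr : ∀ k, star (r k) * r k = (n k.1 : ℂ)⁻¹ := fun k => by
    have e : (Real.sqrt (n k.1))⁻¹ * (Real.sqrt (n k.1))⁻¹ = (n k.1)⁻¹ := by
      rw [← mul_inv, Real.mul_self_sqrt (hn0 _)]
    simp only [r, ← starRingEnd_apply, Complex.conj_ofReal]
    rw [← Complex.ofReal_mul, e, Complex.ofReal_inv]
  have hscale : ∀ (k : κ) x, star (r k • ζ k.1) * x * (r k • ζ k.1) =
      (n k.1 : ℂ)⁻¹ • (star (ζ k.1) * x * ζ k.1) := fun k x => by
    rw [star_smul, smul_mul_assoc, smul_mul_smul_comm, hr]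
  have hd : ∀ x ∈ B, ∃ d : K × Bool → ℂ, (∀ k, star (ζ k) * x * ζ k = d k • p) ∧
      (∀ k, n k = 0 → d k = 0) ∧ φ x = ∑ k, d k := by
    intro x hx
    choose c hc using F.scalar x hx
    refine ⟨fun k => ∑ s, ∑ t, star (w k s) * w k t * c s t,
      fun k => Frame.compress (w k) hc, fun k hk => ?_, ?_⟩
    · exact Finset.sum_eq_zero fun s _ => Finset.sum_eq_zero fun t _ => by simp [hw0 k hk]
    · conv_lhs => rw [F.expand hc]
      rw [h.map_sum, Finset.sum_comm]
      refine Finset.sum_congr rfl fun s _ => ?_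
      rw [h.map_sum, Finset.sum_comm]
      refine Finset.sum_congr rfl fun t _ => ?_
      rw [h.2.1, ← hw, Finset.mul_sum]
      exact Finset.sum_congr rfl fun k _ => mul_comm _ _
  refine ⟨κ, inferInstance, fun k => n k.1, fun k => r k • ζ k.1, hκ, fun k => ⟨?_, ?_, ?_, ?_, ?_⟩,
    ?_⟩
  · exact B.smul_mem (hζmem _) _
  · have := hscale k 1
    rw [mul_one, mul_one, hζn, smul_smul, inv_mul_cancel₀ (by exact_mod_cast k.2), one_smul] at this
    exact this
  · rw [smul_mul_assoc, hζp]
  · exact ⟨k.1.2, by rw [map_smul, hζh, smul_comm]⟩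
  · intro x hx
    obtain ⟨d, hd, -⟩ := hd x hx
    exact ⟨_, by rw [hscale, hd, smul_smul]⟩
  · intro x hx
    obtain ⟨d, hd, hd0, hφ⟩ := hd x hx
    refine ⟨fun k => (n k.1 : ℂ)⁻¹ * d k.1, fun k => by rw [hscale, hd, smul_smul], ?_⟩
    rw [hφ]
    have e : ∀ k : κ, (n k.1 : ℂ) * ((n k.1 : ℂ)⁻¹ * d k.1) = d k.1 := fun k =>
      mul_inv_cancel_left₀ (by exact_mod_cast k.2) _
    simp only [e]
    rw [← Finset.sum_filter_of_ne (p := fun k => n k ≠ 0) (fun k _ hk hn => hk (hd0 k hn))]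
    exact Finset.sum_subtype _ (by simp) _

end Decompose

/-- Vector states of homogeneous vectors are even. -/
theorem FrameVec.compress_parity {B : StarSubalgebra ℂ A} {p ξ : A} (V : FrameVec Θ B p ξ)
    (hp : Θ p = p) {x : A} {c : ℂ} (hc : star ξ * x * ξ = c • p) :
    star ξ * Θ x * ξ = c • p := by
  obtain ⟨δ, hδ⟩ := V.homog
  have := congrArg Θ hc
  rwa [map_mul, map_mul, StarHomClass.map_star Θ, hδ, map_smul, hp, star_smul,
    smul_mul_assoc, smul_mul_smul_comm, star_paritySign, paritySign_mul_self, one_smul] at this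

/-- A functional which on `B` is given by a frame vector `ξ` is pure on `B`: the projection
`e = ξ ξ*` lies in `B`, has expectation `1`, and satisfies `e x e = φ(x) e`. -/
theorem FrameVec.isPureStateOn {B : StarSubalgebra ℂ A} {p ξ : A} (V : FrameVec Θ B p ξ)
    {χ : A → ℂ} (hχ : ∀ x ∈ B, ∀ c : ℂ, star ξ * x * ξ = c • p → χ x = c) :
    IsPureStateOn χ (B : Set A) := by
  have hp : p * p = p := by
    nth_rw 1 [← V.norm]
    rw [mul_assoc, V.mul_p, V.norm]
  have hpξ : p * star ξ = star ξ := by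
    have hps : star p = p := by rw [← V.norm, star_mul, star_star]
    have := congrArg star V.mul_p
    rwa [star_mul, hps] at this
  set e := ξ * star ξ with he
  have heB : e ∈ B := mul_mem V.mem (star_mem V.mem)
  have hes : star e = e := by simp [he]
  have hee : e * e = e := by
    rw [he, mul_assoc, ← mul_assoc (star ξ), V.norm, hpξ]
  have hχe : χ e = 1 := by
    refine hχ e heB 1 ?_
    rw [he, ← mul_assoc, V.norm, mul_assoc, V.norm, hp, one_smul]
  have hexe : ∀ x ∈ B, e * x * e = χ x • e := by
    intro x hx
    obtain ⟨c, hc⟩ := V.scalar x hx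
    rw [hχ x hx c hc]
    calc e * x * e = ξ * (star ξ * x * ξ) * star ξ := by simp only [he, mul_assoc]
      _ = c • e := by rw [hc, mul_smul_comm, smul_mul_assoc, V.mul_p]
  have h1e : star (1 - e) * (1 - e) = 1 - e := by
    rw [star_sub, star_one, hes, mul_sub, sub_mul (1 : A) e e, hee]; simp
  have h1es : star (1 - e) = 1 - e := by rw [star_sub, star_one, hes]
  -- a state with expectation `1` on `e` agrees with `χ` on `B`
  have key : ∀ ψ : A → ℂ, IsState ψ → ψ e = 1 → ∀ x ∈ B, ψ x = χ x := by
    intro ψ hψ hψe x hx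
    have h0 : ψ (star (1 - e) * (1 - e)) = 0 := by rw [h1e, hψ.map_sub, hψ.2.2.1, hψe, sub_self]
    have ha := hψ.map_mul_eq_zero h0 x
    have hb := hψ.map_mul_eq_zero' h0 (x * e)
    have hx' : x = x * (1 - e) + star (1 - e) * (x * e) + e * x * e := by
      rw [h1es]; noncomm_ring
    conv_lhs => rw [hx', hψ.1, hψ.1, ha, hb, hexe x hx, hψ.2.1, hψe]
    simp
  have hle : ∀ ψ : A → ℂ, IsState ψ → (ψ e).re ≤ 1 ∧ (ψ e).im = 0 := by
    intro ψ hψ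
    have := Complex.nonneg_iff.1 (hψ.2.2.2 (1 - e))
    rw [h1e, hψ.map_sub, hψ.2.2.1] at this
    simp at this
    exact ⟨this.1, this.2⟩
  intro ψ₁ ψ₂ h₁ h₂ t ht0 ht1 hdec
  have hd := hdec e heB
  rw [hχe] at hd
  have hre := congrArg Complex.re hd
  simp at hre
  obtain ⟨l1, i1⟩ := hle ψ₁ h₁
  obtain ⟨l2, i2⟩ := hle ψ₂ h₂
  have e1 : ψ₁ e = 1 := Complex.ext (by simp; nlinarith) (by simpa using i1)
  have e2 : ψ₂ e = 1 := Complex.ext (by simp; nlinarith) (by simpa using i2)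
  exact fun x hx => ⟨key ψ₁ h₁ e1 x hx, key ψ₂ h₂ e2 x hx⟩

/-! ### Product states -/

/-- Vector states for disjoint sets of modes have a product extension to the whole algebra. The
identity `(ξη)* x y (ξη) = c d p q` gives it on `A(I) A(J)`, and conjugating the given state `ω` by
the two frames turns the minimal projection `p q` into `1`. -/
theorem exists_product_state (h : IsCAR a) (hΘ : ∀ i, Θ (a i) = - a i) {I J : Set ι}
    (hIJ : Disjoint I J) {ω : A → ℂ} (hω : IsState ω)
    {K : Type} [Fintype K] [DecidableEq K] {v : K → A} {p : A} {ε : K → Bool}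
    (F : Frame Θ (StarAlgebra.adjoin ℂ (a '' I)) K v p ε)
    {L : Type} [Fintype L] [DecidableEq L] {u : L → A} {q : A} {ε' : L → Bool}
    (G : Frame Θ (StarAlgebra.adjoin ℂ (a '' J)) L u q ε')
    {ξ η : A} (hξ : FrameVec Θ (StarAlgebra.adjoin ℂ (a '' I)) p ξ)
    (hη : FrameVec Θ (StarAlgebra.adjoin ℂ (a '' J)) q η) :
    ∃ χ : A → ℂ, IsState χ ∧ ∀ x ∈ StarAlgebra.adjoin ℂ (a '' I),
      ∀ y ∈ StarAlgebra.adjoin ℂ (a '' J), ∀ c d : ℂ, star ξ * x * ξ = c • p →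
        star η * y * η = d • q → χ (x * y) = c * d := by
  have hpc : ∀ y ∈ StarAlgebra.adjoin ℂ (a '' J), y * p = p * y := fun y hy =>
    h.mul_comm_of_even hΘ hIJ F.p_mem F.p_even hy
  have hvec : ∀ x ∈ StarAlgebra.adjoin ℂ (a '' I),
      ∀ y ∈ StarAlgebra.adjoin ℂ (a '' J), ∀ c d : ℂ, star ξ * x * ξ = c • p →
        star η * y * η = d • q → star (ξ * η) * (x * y) * (ξ * η) = (c * d) • (p * q) := by
    intro x hx y hy c d hc hd
    obtain ⟨δ, hδ⟩ := hξ.homog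
    obtain ⟨y', hy', hyd⟩ : ∃ y', y * ξ = ξ * y' ∧ star η * y' * η = d • q := by
      cases δ with
      | true =>
        exact ⟨y, h.mul_comm_of_even hΘ hIJ hξ.mem (by simpa [paritySign] using hδ) hy, hd⟩
      | false =>
        exact ⟨Θ y, h.mul_comm_of_odd hΘ hIJ hξ.mem (by simpa [paritySign] using hδ) hy,
          hη.compress_parity G.p_even hd⟩
    calc star (ξ * η) * (x * y) * (ξ * η)
        = star η * (star ξ * x * (y * ξ)) * η := by simp only [star_mul, mul_assoc]
      _ = star η * ((star ξ * x * ξ) * y') * η := by rw [hy']; simp only [mul_assoc]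
      _ = c • (star η * p * (y' * η)) := by
        rw [hc]; simp only [smul_mul_assoc, mul_smul_comm, mul_assoc]
      _ = c • (p * (star η * y' * η)) := by
        rw [hpc _ (star_mem hη.mem)]; simp only [mul_assoc]
      _ = (c * d) • (p * q) := by rw [hyd, mul_smul_comm, smul_smul]
  have htot : ∑ k : K × L, v k.1 * u k.2 * (p * q) * star (v k.1 * u k.2) = 1 := by
    have e : ∀ k : K × L, v k.1 * u k.2 * (p * q) * star (v k.1 * u k.2) =
        v k.1 * (u k.2 * star (u k.2)) * star (v k.1) := fun k => by
      calc v k.1 * u k.2 * (p * q) * star (v k.1 * u k.2)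
          = v k.1 * (u k.2 * p) * q * star (v k.1 * u k.2) := by simp only [mul_assoc]
        _ = (v k.1 * p) * (u k.2 * q) * star (v k.1 * u k.2) := by
          rw [hpc _ (G.mem _)]; simp only [mul_assoc]
        _ = _ := by rw [F.mul_p, G.mul_p]; simp only [star_mul, mul_assoc]
    simp only [e, Fintype.sum_prod_type, ← Finset.mul_sum, ← Finset.sum_mul, G.total, mul_one,
      F.total]
  let m : K × L → A := fun k => ξ * η * star (v k.1 * u k.2)
  have hm : ∀ x ∈ StarAlgebra.adjoin ℂ (a '' I),
      ∀ y ∈ StarAlgebra.adjoin ℂ (a '' J), ∀ c d : ℂ, star ξ * x * ξ = c • p →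
        star η * y * η = d • q → ∑ k, ω (star (m k) * (x * y) * m k) = c * d := by
    intro x hx y hy c d hc hd
    rw [← hω.map_sum]
    have e : ∀ k, star (m k) * (x * y) * m k =
        (c * d) • (v k.1 * u k.2 * (p * q) * star (v k.1 * u k.2)) := fun k => by
      calc star (m k) * (x * y) * m k
          = (v k.1 * u k.2) * (star (ξ * η) * (x * y) * (ξ * η)) * star (v k.1 * u k.2) := by
            simp only [m, star_mul, star_star, mul_assoc]
        _ = _ := by rw [hvec x hx y hy c d hc hd, mul_smul_comm, smul_mul_assoc]
    rw [Finset.sum_congr rfl fun k _ => e k, ← Finset.smul_sum, htot, hω.2.1, hω.2.2.1, mul_one]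
  refine ⟨_, hω.sum_conj m ?_, hm⟩
  have := hm 1 (one_mem _) 1 (one_mem _) 1 1 (by simp [hξ.norm]) (by simp [hη.norm])
  simpa using this

/-- For a product state, replacing both marginals by their parity averages computes the parity
average of the state: on products of two odd elements the state vanishes, because such elements
anticommute while the state is hermitian. -/
theorem average_mul (h : IsCAR a) (hΘ : ∀ i, Θ (a i) = - a i) {I J : Set ι}
    (hIJ : Disjoint I J) {φ : A → ℂ} (hφ : IsState φ)
    (hprod : ∀ x ∈ StarAlgebra.adjoin ℂ (a '' I), ∀ y ∈ StarAlgebra.adjoin ℂ (a '' J),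
      φ (x * y) = φ x * φ y) {x y : A} (hx : x ∈ StarAlgebra.adjoin ℂ (a '' I))
    (hy : y ∈ StarAlgebra.adjoin ℂ (a '' J)) :
    (φ (x * y) + φ (Θ (x * y))) / 2 = ((φ x + φ (Θ x)) / 2) * ((φ y + φ (Θ y)) / 2) := by
  have hΘx := parity_mem hΘ hx
  have hΘy := parity_mem hΘ hy
  have hxo : Θ (x - Θ x) = -(x - Θ x) := by rw [map_sub, parity_parity hΘ hx, neg_sub]
  have hyo : Θ (y - Θ y) = -(y - Θ y) := by rw [map_sub, parity_parity hΘ hy, neg_sub]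
  have hxm := sub_mem hx hΘx
  have hym := sub_mem hy hΘy
  have h1 := hprod _ hxm _ hym
  have h2 := hprod _ (star_mem hxm) _ (star_mem hym)
  have h3 : star (y - Θ y) * star (x - Θ x) = -(star (x - Θ x) * star (y - Θ y)) := by
    rw [h.mul_comm_of_odd hΘ hIJ (star_mem hxm) (by rw [StarHomClass.map_star Θ, hxo, star_neg])
      (star_mem hym), StarHomClass.map_star Θ, hyo, star_neg, mul_neg]
  have h4 := hφ.map_star ((x - Θ x) * (y - Θ y))
  rw [star_mul, h3, hφ.map_neg, h2, hφ.map_star, hφ.map_star, h1, star_mul'] at h4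
  have h5 : φ (x - Θ x) * φ (y - Θ y) = 0 := by
    have : star (φ (x - Θ x) * φ (y - Θ y)) = 0 := by
      rw [star_mul']; linear_combination (-1 / 2 : ℂ) * h4
    exact star_eq_zero.1 this
  rw [hφ.map_sub, hφ.map_sub] at h5
  rw [map_mul, hprod x hx y hy, hprod _ hΘx _ hΘy]
  linear_combination (1 / 4 : ℂ) * h5

end CAR

/-- for finite `I`, `J`, every even separable state for the CAR pair
`(A(I), A(J))` admits a separable decomposition into product states whose marginals are all
pure even states. -/
theorem even_separable_has_pure_even_decomposition
    {A : Type*} [Ring A] [StarRing A] [Algebra ℂ A] [StarModule ℂ A]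
    {ι : Type*} [DecidableEq ι] (a : ι → A) (hCAR : IsCAR a)
    (Θ : A ≃⋆ₐ[ℂ] A) (hΘ : ∀ i, Θ (a i) = - a i)
    (I J : Finset ι) (hdisj : Disjoint I J)
    (ω : A → ℂ) (hω : IsState ω) (heven : ∀ x, ω (Θ x) = ω x)
    (hsep : IsSeparableState ω (StarAlgebra.adjoin ℂ (a '' (I : Set ι)) : Set A)
      (StarAlgebra.adjoin ℂ (a '' (J : Set ι)) : Set A)) :
    ∃ (n : ℕ) (lam : Fin n → ℝ) (φ ω₁ ω₂ : Fin n → (A → ℂ)),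
      (∀ i, 0 < lam i) ∧ (∑ i, lam i = 1) ∧
      (∀ i, IsState (φ i)) ∧ (∀ i, IsState (ω₁ i)) ∧ (∀ i, IsState (ω₂ i)) ∧
      (∀ i, ∀ x ∈ StarAlgebra.adjoin ℂ (a '' (I : Set ι)),
        ∀ y ∈ StarAlgebra.adjoin ℂ (a '' (J : Set ι)),
        φ i (x * y) = ω₁ i x * ω₂ i y) ∧
      (∀ i, ∀ x ∈ StarAlgebra.adjoin ℂ (a '' (I : Set ι)), ω₁ i (Θ x) = ω₁ i x) ∧
      (∀ i, ∀ y ∈ StarAlgebra.adjoin ℂ (a '' (J : Set ι)), ω₂ i (Θ y) = ω₂ i y) ∧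
      (∀ i, IsPureStateOn (ω₁ i) (StarAlgebra.adjoin ℂ (a '' (I : Set ι)) : Set A)) ∧
      (∀ i, IsPureStateOn (ω₂ i) (StarAlgebra.adjoin ℂ (a '' (J : Set ι)) : Set A)) ∧
      (∀ x ∈ StarAlgebra.adjoin ℂ (a '' (I : Set ι)),
        ∀ y ∈ StarAlgebra.adjoin ℂ (a '' (J : Set ι)),
        ω (x * y) = ∑ i, (lam i : ℂ) * φ i (x * y)) := by
  obtain ⟨n, lam, φ, hlam, hlam1, hφ, hprod, hω'⟩ := hsep
  have hIJ : Disjoint (I : Set ι) (J : Set ι) := Finset.disjoint_coe.2 hdisj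
  obtain ⟨K, _, _, v, p, ε, F⟩ := exists_frame hCAR hΘ I
  obtain ⟨L, _, _, u, q, ε', G⟩ := exists_frame hCAR hΘ J
  have hev : ∀ S : Set ι, ∀ i, ∀ x ∈ StarAlgebra.adjoin ℂ (a '' S),
      (φ i (Θ x) + φ i (Θ (Θ x))) / 2 = (φ i x + φ i (Θ x)) / 2 := fun S i x hx => by
    rw [parity_parity hΘ hx, add_comm]
  choose κ hκ N ξ hN hξ hdec using fun i => F.decompose ((hφ i).average Θ) (hev _ i)
  choose κ' hκ' N' η hN' hη hdec' using fun i => G.decompose ((hφ i).average Θ) (hev _ i)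
  let X := Σ i : Fin n, κ i × κ' i
  choose χ hχ hχprod using fun k : X => exists_product_state hCAR hΘ hIJ hω F G
    (hξ k.1 k.2.1) (hη k.1 k.2.2)
  have hχI : ∀ (k : X), ∀ x ∈ StarAlgebra.adjoin ℂ (a '' (I : Set ι)), ∀ c : ℂ,
      star (ξ k.1 k.2.1) * x * ξ k.1 k.2.1 = c • p → χ k x = c := fun k x hx c hc => by
    simpa using hχprod k x hx 1 (one_mem _) c 1 hc (by simp [(hη k.1 k.2.2).norm])
  have hχJ : ∀ (k : X), ∀ y ∈ StarAlgebra.adjoin ℂ (a '' (J : Set ι)), ∀ d : ℂ,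
      star (η k.1 k.2.2) * y * η k.1 k.2.2 = d • q → χ k y = d := fun k y hy d hd => by
    simpa using hχprod k 1 (one_mem _) y hy 1 d (by simp [(hξ k.1 k.2.1).norm]) hd
  have hχmul : ∀ (k : X), ∀ x ∈ StarAlgebra.adjoin ℂ (a '' (I : Set ι)),
      ∀ y ∈ StarAlgebra.adjoin ℂ (a '' (J : Set ι)), χ k (x * y) = χ k x * χ k y := by
    intro k x hx y hy
    obtain ⟨c, hc⟩ := (hξ k.1 k.2.1).scalar x hx
    obtain ⟨d, hd⟩ := (hη k.1 k.2.2).scalar y hy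
    rw [hχprod k x hx y hy c d hc hd, hχI k x hx c hc, hχJ k y hy d hd]
  let W : X → ℝ := fun k => lam k.1 * (N k.1 k.2.1 * N' k.1 k.2.2)
  have hW : ∀ k, 0 < W k := fun k => mul_pos (hlam _) (mul_pos (hN _ _) (hN' _ _))
  have hmain : ∀ x ∈ StarAlgebra.adjoin ℂ (a '' (I : Set ι)),
      ∀ y ∈ StarAlgebra.adjoin ℂ (a '' (J : Set ι)),
      ω (x * y) = ∑ k, (W k : ℂ) * χ k (x * y) := by
    intro x hx y hy
    -- evenness of `ω` allows replacing each product state by its parity average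
    have h1 : ω (x * y) = ∑ i, (lam i : ℂ) * ((φ i (x * y) + φ i (Θ (x * y))) / 2) := by
      have e1 := hω' x hx y hy
      have e2 := hω' (Θ x) (parity_mem hΘ hx) (Θ y) (parity_mem hΘ hy)
      rw [← map_mul, heven] at e2
      have e3 : ω (x * y) = (ω (x * y) + ω (x * y)) / 2 := by ring
      rw [e3]
      nth_rw 1 [e1]
      rw [e2, ← Finset.sum_add_distrib, Finset.sum_div]
      exact Finset.sum_congr rfl fun i _ => by ring
    rw [h1, Fintype.sum_sigma]
    refine Finset.sum_congr rfl fun i _ => ?_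
    rw [average_mul hCAR hΘ hIJ (hφ i) (hprod i) hx hy]
    obtain ⟨c, hc, hc'⟩ := hdec i x hx
    obtain ⟨d, hd, hd'⟩ := hdec' i y hy
    rw [hc', hd', Finset.sum_mul_sum, Finset.mul_sum, Fintype.sum_prod_type]
    refine Finset.sum_congr rfl fun k _ => ?_
    rw [Finset.mul_sum]
    refine Finset.sum_congr rfl fun l _ => ?_
    rw [hχprod ⟨i, k, l⟩ x hx y hy (c k) (d l) (hc k) (hd l)]
    simp only [W, Complex.ofReal_mul]
    ring
  have hW1 : ∑ k, W k = 1 := by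
    have := hmain 1 (one_mem _) 1 (one_mem _)
    simp only [mul_one, hω.2.2.1, (hχ _).2.2.1] at this
    exact_mod_cast this.symm
  let e : Fin (Fintype.card X) ≃ X := (Fintype.equivFin X).symm
  refine ⟨Fintype.card X, fun i => W (e i), fun i => χ (e i), fun i => χ (e i), fun i => χ (e i),
    fun i => hW _, by rw [← hW1]; exact e.sum_comp W, fun i => hχ _, fun i => hχ _, fun i => hχ _,
    fun i => hχmul _, fun i x hx => ?_, fun i y hy => ?_,
    fun i => (hξ (e i).1 (e i).2.1).isPureStateOn (hχI (e i)),
    fun i => (hη (e i).1 (e i).2.2).isPureStateOn (hχJ (e i)), fun x hx y hy => ?_⟩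
  · obtain ⟨c, hc⟩ := (hξ (e i).1 (e i).2.1).scalar x hx
    exact (hχI _ _ (parity_mem hΘ hx) c
      ((hξ (e i).1 (e i).2.1).compress_parity F.p_even hc)).trans (hχI _ x hx c hc).symm
  · obtain ⟨c, hc⟩ := (hη (e i).1 (e i).2.2).scalar y hy
    exact (hχJ _ _ (parity_mem hΘ hy) c
      ((hη (e i).1 (e i).2.2).compress_parity G.p_even hc)).trans (hχJ _ y hy c hc).symm
  · rw [hmain x hx y hy]
    exact (e.sum_comp fun k => (W k : ℂ) * χ k (x * y)).symm
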